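/- Let χ : L → M be an injective morphism of differential graded Lie algebras over a field K of characteristic 0. Then the map TW(χ) → (M/χ(L))[−1] sending (l, p(t) m₀ + q(t) dt m₁) to (∫₀¹ q(t) dt) · m₁ modulo χ(L) is a surjective quasi-isomorphism of complexes from the homotopy fibre of χ to the shifted cokernel of χ. -/

import Mathlib

/-!
Basic homotopical algebra of differential graded Lie algebras over a field of
characteristic zero, following [Iacono, "Deformations and obstructions of pairs (X,D)"].

A differential graded Lie algebra (DGLA) is encoded as a `K`-module together with an
internal `ℤ`-grading (a family of submodules whose direct sum is the whole module),
a differential of degree `+1` squaring to zero, and a bracket which is graded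
skew-symmetric, satisfies the graded Jacobi identity and the graded Leibniz rule.
-/

universe u v w

/-- A `ℤ`-graded cochain complex structure on a `K`-module `V`: an internal grading
together with a differential of degree `+1` squaring to zero. -/
structure CochainStruct (K : Type u) [Field K] (V : Type v) [AddCommGroup V] [Module K V] :
    Type (max u v) where
  grading : ℤ → Submodule K V
  isInternal : DirectSum.IsInternal grading
  d : V →ₗ[K] V
  d_degree : ∀ i : ℤ, ∀ x ∈ grading i, d x ∈ grading (i + 1)
  d_sq : ∀ x : V, d (d x) = 0

namespace CochainStruct

variable {K : Type u} [Field K] {V : Type v} [AddCommGroup V] [Module K V]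
  {W : Type w} [AddCommGroup W] [Module K W]

/-- Degree `i` cocycles. -/
def cocycles (c : CochainStruct K V) (i : ℤ) : Submodule K V :=
  c.grading i ⊓ LinearMap.ker c.d

/-- Degree `i` coboundaries, as a submodule of the degree `i` cocycles. -/
def coboundaries (c : CochainStruct K V) (i : ℤ) : Submodule K (c.cocycles i) :=
  Submodule.comap (c.cocycles i).subtype (c.grading i ⊓ LinearMap.range c.d)

/-- The degree `i` cohomology of a graded cochain complex. -/
def cohomology (c : CochainStruct K V) (i : ℤ) : Type v :=
  c.cocycles i ⧸ c.coboundaries i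

instance (c : CochainStruct K V) (i : ℤ) : AddCommGroup (c.cohomology i) :=
  inferInstanceAs (AddCommGroup (c.cocycles i ⧸ c.coboundaries i))

instance (c : CochainStruct K V) (i : ℤ) : Module K (c.cohomology i) :=
  inferInstanceAs (Module K (c.cocycles i ⧸ c.coboundaries i))

end CochainStruct

/-- A (degree zero) morphism of graded cochain complexes. -/
structure CochainMap {K : Type u} [Field K] {V : Type v} {W : Type w}
    [AddCommGroup V] [Module K V] [AddCommGroup W] [Module K W]
    (c : CochainStruct K V) (c' : CochainStruct K W) : Type (max u v w) where
  toFun : V →ₗ[K] W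
  map_grading : ∀ i : ℤ, ∀ x ∈ c.grading i, toFun x ∈ c'.grading i
  map_d : ∀ x : V, toFun (c.d x) = c'.d (toFun x)

namespace CochainMap

variable {K : Type u} [Field K] {V : Type v} {W : Type w}
  [AddCommGroup V] [Module K V] [AddCommGroup W] [Module K W]
  {c : CochainStruct K V} {c' : CochainStruct K W}

/-- The induced map on cocycles. -/
def cocyclesMap (f : CochainMap c c') (i : ℤ) : c.cocycles i →ₗ[K] c'.cocycles i :=
  f.toFun.restrict (p := c.cocycles i) (q := c'.cocycles i) fun x hx => by
    rcases Submodule.mem_inf.mp hx with ⟨h1, h2⟩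
    refine Submodule.mem_inf.mpr ⟨f.map_grading i x h1, ?_⟩
    simp only [LinearMap.mem_ker] at h2 ⊢
    rw [← f.map_d, h2, map_zero]

/-- The induced map in cohomology. -/
def cohMap (f : CochainMap c c') (i : ℤ) :
    c.cohomology i →ₗ[K] c'.cohomology i :=
  Submodule.mapQ (c.coboundaries i) (c'.coboundaries i) (f.cocyclesMap i) (by
    rintro ⟨x, hx⟩ hmem
    simp only [CochainStruct.coboundaries, Submodule.mem_comap] at hmem ⊢
    rcases Submodule.mem_inf.mp hmem with ⟨h1, h2⟩
    refine Submodule.mem_inf.mpr ⟨?_, ?_⟩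
    · exact f.map_grading i x h1
    · rcases h2 with ⟨y, hy⟩
      exact ⟨f.toFun y, by
        have := f.map_d y
        simp only [Submodule.coe_subtype] at hy ⊢
        rw [← this, hy]
        rfl⟩)

end CochainMap

/-- A differential graded Lie algebra structure on a `K`-module `L`:
a graded cochain complex together with a degree zero graded bracket which is
graded skew-symmetric and satisfies the graded Jacobi identity and the graded
Leibniz rule. -/
structure DGLAStruct (K : Type u) [Field K] (L : Type v) [AddCommGroup L] [Module K L]
    extends CochainStruct K L where
  bracket : L →ₗ[K] L →ₗ[K] L
  bracket_degree : ∀ i j : ℤ, ∀ x ∈ grading i, ∀ y ∈ grading j, bracket x y ∈ grading (i + j)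
  bracket_skew : ∀ i j : ℤ, ∀ x ∈ grading i, ∀ y ∈ grading j,
    bracket x y = -(((-1 : K) ^ (i * j)) • bracket y x)
  bracket_jacobi : ∀ i j : ℤ, ∀ x ∈ grading i, ∀ y ∈ grading j, ∀ z : L,
    bracket x (bracket y z) =
      bracket (bracket x y) z + ((-1 : K) ^ (i * j)) • bracket y (bracket x z)
  bracket_leibniz : ∀ i : ℤ, ∀ x ∈ grading i, ∀ y : L,
    d (bracket x y) = bracket (d x) y + ((-1 : K) ^ i) • bracket x (d y)

/-- A morphism of differential graded Lie algebras. -/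
structure DGLAStructHom {K : Type u} [Field K] {L : Type v} {M : Type w}
    [AddCommGroup L] [Module K L] [AddCommGroup M] [Module K M]
    (g : DGLAStruct K L) (h : DGLAStruct K M) : Type (max u v w) where
  toFun : L →ₗ[K] M
  map_grading : ∀ i : ℤ, ∀ x ∈ g.grading i, toFun x ∈ h.grading i
  map_d : ∀ x : L, toFun (g.d x) = h.d (toFun x)
  map_bracket : ∀ x y : L, toFun (g.bracket x y) = h.bracket (toFun x) (toFun y)

namespace DGLAStructHom

variable {K : Type u} [Field K] {L : Type v} {M : Type w}
  [AddCommGroup L] [Module K L] [AddCommGroup M] [Module K M]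
  {g : DGLAStruct K L} {h : DGLAStruct K M}

/-- The underlying morphism of complexes of a morphism of DGLAs. -/
def toCochainMap (f : DGLAStructHom g h) :
    CochainMap g.toCochainStruct h.toCochainStruct :=
  ⟨f.toFun, f.map_grading, f.map_d⟩

/-- A quasi-isomorphism of DGLAs is a morphism inducing bijections in cohomology. -/
def IsQuasiIso (f : DGLAStructHom g h) : Prop :=
  ∀ i : ℤ, Function.Bijective (f.toCochainMap.cohMap i)

end DGLAStructHom

/-- A bundled differential graded Lie algebra over `K`. -/
structure DGLA (K : Type u) [Field K] : Type (max u (v + 1)) where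
  carrier : Type v
  [acg : AddCommGroup carrier]
  [mod : Module K carrier]
  str : DGLAStruct K carrier

attribute [instance] DGLA.acg DGLA.mod

namespace DGLA

variable {K : Type u} [Field K]

/-- Two DGLAs are related if there is a quasi-isomorphism from the first to the second. -/
def qisRel : DGLA.{u, v} K → DGLA.{u, v} K → Prop := fun X Y =>
  ∃ f : DGLAStructHom X.str Y.str, f.IsQuasiIso

/-- Homotopy equivalence of DGLAs: the equivalence relation generated by
quasi-isomorphisms. -/
def HomotopyEquiv (X Y : DGLA.{u, v} K) : Prop :=
  Relation.EqvGen qisRel X Y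

/-- A DGLA is abelian if its bracket is trivial. -/
def IsAbelian (X : DGLA.{u, v} K) : Prop :=
  ∀ x y : X.carrier, X.str.bracket x y = 0

/-- A DGLA is homotopy abelian if it is homotopy equivalent (i.e. quasi-isomorphic,
under the equivalence relation generated by quasi-isomorphisms) to an abelian DGLA. -/
def HomotopyAbelian (X : DGLA.{u, v} K) : Prop :=
  ∃ Y : DGLA.{u, v} K, Y.IsAbelian ∧ X.HomotopyEquiv Y

end DGLA

/-- A zig-zag of morphisms of DGLAs (the backwards arrows being quasi-isomorphisms):
a morphism in the homotopy category of DGLAs, i.e. an `L∞` morphism of DGLAs. -/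
inductive ZigZag {K : Type u} [Field K] : DGLA.{u, v} K → DGLA.{u, v} K → Type (max u (v + 1))
  | refl (X : DGLA.{u, v} K) : ZigZag X X
  | fwd {X Y Z : DGLA.{u, v} K} (f : DGLAStructHom X.str Y.str) (t : ZigZag Y Z) : ZigZag X Z
  | bwd {X Y Z : DGLA.{u, v} K} (f : DGLAStructHom Y.str X.str) (hf : f.IsQuasiIso)
      (t : ZigZag Y Z) : ZigZag X Z

/-- The map induced in cohomology by a zig-zag of morphisms of DGLAs. -/
noncomputable def ZigZag.cohMap {K : Type u} [Field K] :
    ∀ {X Y : DGLA.{u, v} K}, ZigZag X Y → ∀ i : ℤ,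
      X.str.toCochainStruct.cohomology i →ₗ[K] Y.str.toCochainStruct.cohomology i
  | _, _, .refl _, _ => LinearMap.id
  | _, _, .fwd f t, i => (t.cohMap i).comp (f.toCochainMap.cohMap i)
  | _, _, .bwd f hf t, i =>
      (t.cohMap i).comp
        ((LinearEquiv.ofBijective (f.toCochainMap.cohMap i) (hf i)).symm.toLinearMap)

/-!
The differential graded vector space `M[t,dt] = M ⊗ K[t,dt]` of polynomial differential
forms on the affine line with coefficients in a DGLA `M`, homotopy fibres, and Cartan
homotopies.  An element of `M[t,dt]` is written `p(t) + q(t) dt` and encoded as the pair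
of coefficient families `(p, q) : (ℕ →₀ M) × (ℕ →₀ M)`.
-/

/-- `M[t,dt]`: polynomial forms on the affine line with coefficients in `M`,
encoded as pairs `(p, q)` with `p(t) + q(t) dt`. -/
abbrev PolyDt (K : Type u) [Field K] (M : Type v) [AddCommGroup M] [Module K M] : Type v :=
  (ℕ →₀ M) × (ℕ →₀ M)

section PolyDt

variable {K : Type u} [Field K] {M : Type v} [AddCommGroup M] [Module K M]

/-- Evaluation at `t = 0`, `dt = 0`. -/
noncomputable def evAt0 : PolyDt K M →ₗ[K] M :=
  (Finsupp.lapply 0).comp (LinearMap.fst K (ℕ →₀ M) (ℕ →₀ M))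

/-- Evaluation at `t = 1`, `dt = 0`. -/
noncomputable def evAt1 : PolyDt K M →ₗ[K] M :=
  ((Finsupp.lsum K fun _ : ℕ => (LinearMap.id : M →ₗ[K] M)) :
      (ℕ →₀ M) →ₗ[K] M).comp (LinearMap.fst K (ℕ →₀ M) (ℕ →₀ M))

/-- The element `t^n m` of `M[t,dt]`. -/
noncomputable def inlP (n : ℕ) (m : M) : PolyDt K M := (Finsupp.single n m, 0)

/-- The element `t^n dt m` of `M[t,dt]`. -/
noncomputable def inrP (n : ℕ) (m : M) : PolyDt K M := (0, Finsupp.single n m)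

/-- The degree `j` part of `M[t,dt]` (with `t` of degree `0` and `dt` of degree `1`). -/
def polyGrading (h : DGLAStruct K M) (j : ℤ) : Submodule K (PolyDt K M) where
  carrier := {x | (∀ n : ℕ, x.1 n ∈ h.grading j) ∧ ∀ n : ℕ, x.2 n ∈ h.grading (j - 1)}
  zero_mem' := ⟨fun n => by simp, fun n => by simp⟩
  add_mem' := by
    rintro x y ⟨hx1, hx2⟩ ⟨hy1, hy2⟩
    refine ⟨fun n => ?_, fun n => ?_⟩
    · have : (x + y).1 n = x.1 n + y.1 n := by simp
      rw [this]; exact (h.grading j).add_mem (hx1 n) (hy1 n)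
    · have : (x + y).2 n = x.2 n + y.2 n := by simp
      rw [this]; exact (h.grading (j - 1)).add_mem (hx2 n) (hy2 n)
  smul_mem' := by
    rintro c x ⟨hx1, hx2⟩
    refine ⟨fun n => ?_, fun n => ?_⟩
    · have : (c • x).1 n = c • x.1 n := by simp
      rw [this]; exact (h.grading j).smul_mem c (hx1 n)
    · have : (c • x).2 n = c • x.2 n := by simp
      rw [this]; exact (h.grading (j - 1)).smul_mem c (hx2 n)

/-- The property that a DGLA structure `mt` on `M[t,dt]` is *the* DGLA of polynomial
forms on the affine line with coefficients in `(M, h)`: it is characterised by its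
grading and by its differential and bracket on the elements `t^n m` and `t^n dt m`. -/
structure IsPolyFormsDGLA (h : DGLAStruct K M) (mt : DGLAStruct K (PolyDt K M)) : Prop where
  grading_eq : ∀ j : ℤ, mt.grading j = polyGrading h j
  d_inl : ∀ (n : ℕ) (m : M), mt.d (inlP n m) = inlP n (h.d m) + inrP (n - 1) (n • m)
  d_inr : ∀ (n : ℕ) (m : M), mt.d (inrP n m) = -inrP n (h.d m)
  bracket_ll : ∀ (n n' : ℕ) (m m' : M),
    mt.bracket (inlP n m) (inlP n' m') = inlP (n + n') (h.bracket m m')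
  bracket_lr : ∀ i : ℤ, ∀ m ∈ h.grading i, ∀ (n n' : ℕ) (m' : M),
    mt.bracket (inlP n m) (inrP n' m') = ((-1 : K) ^ i) • inrP (n + n') (h.bracket m m')
  bracket_rl : ∀ (n n' : ℕ) (m m' : M),
    mt.bracket (inrP n m) (inlP n' m') = inrP (n + n') (h.bracket m m')
  bracket_rr : ∀ (n n' : ℕ) (m m' : M),
    mt.bracket (inrP n m) (inrP n' m') = 0

end PolyDt

section Fibre

variable {K : Type u} [Field K] {L : Type v} {M : Type v}
  [AddCommGroup L] [Module K L] [AddCommGroup M] [Module K M]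

/-- The underlying module of the homotopy fibre
`TW(χ) = { (l, m(t,dt)) ∈ L × M[t,dt] | m(0,0) = 0, m(1,0) = χ(l) }`
of a morphism of DGLAs `χ : L → M`. -/
noncomputable def fibreSub {g : DGLAStruct K L} {h : DGLAStruct K M}
    (χ : DGLAStructHom g h) : Submodule K (L × PolyDt K M) :=
  LinearMap.ker
    ((evAt0.comp (LinearMap.snd K L (PolyDt K M))).prod
      ((evAt1.comp (LinearMap.snd K L (PolyDt K M))) -
        χ.toFun.comp (LinearMap.fst K L (PolyDt K M))))

/-- The property that a DGLA structure `tw` on the module underlying the homotopy fibre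
of `χ : L → M` is *the* homotopy fibre DGLA: differential, bracket and grading are
computed componentwise from `L` and `M[t,dt]`. -/
structure IsHomotopyFibre {g : DGLAStruct K L} {h : DGLAStruct K M}
    (χ : DGLAStructHom g h) (mt : DGLAStruct K (PolyDt K M))
    (tw : DGLAStruct K ↥(fibreSub χ)) : Prop where
  grading_eq : ∀ i : ℤ, tw.grading i =
    Submodule.comap (fibreSub χ).subtype ((g.grading i).prod (mt.grading i))
  d_eq : ∀ v : fibreSub χ, (tw.d v : L × PolyDt K M) =
    (g.d (v : L × PolyDt K M).1, mt.d (v : L × PolyDt K M).2)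
  bracket_eq : ∀ v w : fibreSub χ, (tw.bracket v w : L × PolyDt K M) =
    (g.bracket (v : L × PolyDt K M).1 (w : L × PolyDt K M).1,
      mt.bracket (v : L × PolyDt K M).2 (w : L × PolyDt K M).2)

end Fibre

/-- A Cartan homotopy between differential graded Lie algebras: a degree `-1` linear
map `i : L → M` such that `i_{[a,b]} = [i_a, d_M i_b]` and `[i_a, i_b] = 0`. -/
structure CartanHomotopy {K : Type u} [Field K] {L : Type v} {M : Type w}
    [AddCommGroup L] [Module K L] [AddCommGroup M] [Module K M]
    (g : DGLAStruct K L) (h : DGLAStruct K M) : Type (max u v w) where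
  toFun : L →ₗ[K] M
  map_grading : ∀ i : ℤ, ∀ x ∈ g.grading i, toFun x ∈ h.grading (i - 1)
  cartan_bracket : ∀ a b : L, toFun (g.bracket a b) = h.bracket (toFun a) (h.d (toFun b))
  cartan_square : ∀ a b : L, h.bracket (toFun a) (toFun b) = 0

section Aux

variable {K : Type u} [Field K] {M : Type v} [AddCommGroup M] [Module K M]

noncomputable def auxInt : (ℕ →₀ M) →ₗ[K] M :=
  Finsupp.lsum K fun n : ℕ => (((n : K) + 1)⁻¹) • (LinearMap.id : M →ₗ[K] M)

noncomputable def auxJ : (ℕ →₀ M) →ₗ[K] (ℕ →₀ M) :=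
  Finsupp.lsum K fun n : ℕ => (((n : K) + 1)⁻¹) • (Finsupp.lsingle (n + 1) : M →ₗ[K] ℕ →₀ M)

noncomputable def auxD : (ℕ →₀ M) →ₗ[K] (ℕ →₀ M) :=
  Finsupp.lsum K fun n : ℕ => (n : K) • (Finsupp.lsingle (n - 1) : M →ₗ[K] ℕ →₀ M)

noncomputable def auxE : (ℕ →₀ M) →ₗ[K] M :=
  Finsupp.lsum K fun _ : ℕ => (LinearMap.id : M →ₗ[K] M)

@[simp] lemma auxInt_single (n : ℕ) (m : M) :
    auxInt (K := K) (Finsupp.single n m) = (((n : K) + 1)⁻¹) • m := by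
  simp [auxInt]

@[simp] lemma auxJ_single (n : ℕ) (m : M) :
    auxJ (K := K) (Finsupp.single n m) = (((n : K) + 1)⁻¹) • Finsupp.single (n + 1) m := by
  simp [auxJ]

@[simp] lemma auxD_single (n : ℕ) (m : M) :
    auxD (K := K) (Finsupp.single n m) = (n : K) • Finsupp.single (n - 1) m := by
  simp [auxD]

@[simp] lemma auxE_single (n : ℕ) (m : M) :
    auxE (K := K) (Finsupp.single n m) = m := by
  simp [auxE]

lemma aux_d {h : DGLAStruct K M} {mt : DGLAStruct K (PolyDt K M)} (hmt : IsPolyFormsDGLA h mt)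
    (p q : ℕ →₀ M) : mt.d (p, q) =
      (Finsupp.mapRange.linearMap h.d p,
        auxD (K := K) p - Finsupp.mapRange.linearMap h.d q) := by
  have h1 : ∀ p : ℕ →₀ M, mt.d (p, 0) = (Finsupp.mapRange.linearMap h.d p, auxD (K := K) p) := by
    intro p
    have : mt.d ∘ₗ LinearMap.inl K (ℕ →₀ M) (ℕ →₀ M) =
        (Finsupp.mapRange.linearMap h.d).prod (auxD (K := K)) := by
      apply Finsupp.lhom_ext
      intro n m
      have := hmt.d_inl n m
      simp only [inlP, inrP] at this
      simp [this, Nat.cast_smul_eq_nsmul]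
    exact LinearMap.congr_fun this p
  have h2 : ∀ q : ℕ →₀ M, mt.d (0, q) = (0, - Finsupp.mapRange.linearMap h.d q) := by
    intro p
    have : mt.d ∘ₗ LinearMap.inr K (ℕ →₀ M) (ℕ →₀ M) =
        (0 : (ℕ →₀ M) →ₗ[K] (ℕ →₀ M)).prod (- Finsupp.mapRange.linearMap h.d) := by
      apply Finsupp.lhom_ext
      intro n m
      have := hmt.d_inr n m
      simp only [inlP, inrP] at this
      simp [this]
    exact LinearMap.congr_fun this p
  have : ((p, q) : PolyDt K M) = (p, 0) + (0, q) := by simp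
  rw [this, map_add, h1, h2]
  simp [sub_eq_add_neg]

lemma auxInt_map (f : M →ₗ[K] M) (q : ℕ →₀ M) :
    auxInt (K := K) (Finsupp.mapRange.linearMap f q) = f (auxInt (K := K) q) := by
  have : auxInt (K := K) ∘ₗ Finsupp.mapRange.linearMap f = f ∘ₗ auxInt (K := K) := by
    apply Finsupp.lhom_ext
    intro n m
    simp
  exact LinearMap.congr_fun this q

lemma auxE_map (f : M →ₗ[K] M) (q : ℕ →₀ M) :
    auxE (K := K) (Finsupp.mapRange.linearMap f q) = f (auxE (K := K) q) := by
  have : auxE (K := K) ∘ₗ Finsupp.mapRange.linearMap f = f ∘ₗ auxE (K := K) := by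
    apply Finsupp.lhom_ext
    intro n m
    simp
  exact LinearMap.congr_fun this q

lemma auxJ_map (f : M →ₗ[K] M) (q : ℕ →₀ M) :
    Finsupp.mapRange.linearMap f (auxJ (K := K) q) =
      auxJ (K := K) (Finsupp.mapRange.linearMap f q) := by
  have : Finsupp.mapRange.linearMap f ∘ₗ auxJ (K := K) =
      auxJ (K := K) ∘ₗ Finsupp.mapRange.linearMap f := by
    apply Finsupp.lhom_ext
    intro n m
    simp
  exact LinearMap.congr_fun this q

lemma auxE_J (q : ℕ →₀ M) : auxE (K := K) (auxJ (K := K) q) = auxInt (K := K) q := by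
  have : auxE (K := K) ∘ₗ auxJ (K := K) = auxInt (K := K) (M := M) := by
    apply Finsupp.lhom_ext
    intro n m
    simp
  exact LinearMap.congr_fun this q

lemma auxJ_zero (q : ℕ →₀ M) : auxJ (K := K) q 0 = 0 := by
  have : Finsupp.lapply 0 ∘ₗ auxJ (K := K) = (0 : (ℕ →₀ M) →ₗ[K] M) := by
    apply Finsupp.lhom_ext
    intro n m
    simp
  exact LinearMap.congr_fun this q

lemma auxD_J [CharZero K] (q : ℕ →₀ M) : auxD (K := K) (auxJ (K := K) q) = q := by
  have : auxD (K := K) ∘ₗ auxJ (K := K) = (LinearMap.id : (ℕ →₀ M) →ₗ[K] _) := by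
    apply Finsupp.lhom_ext
    intro n m
    have : (n : K) + 1 ≠ 0 := by exact_mod_cast n.succ_ne_zero
    simp [smul_smul, -Finsupp.smul_single, this]
  exact LinearMap.congr_fun this q

lemma auxJ_D [CharZero K] (p : ℕ →₀ M) :
    auxJ (K := K) (auxD (K := K) p) = p - Finsupp.single 0 (p 0) := by
  have : auxJ (K := K) ∘ₗ auxD (K := K) =
      (LinearMap.id : (ℕ →₀ M) →ₗ[K] _) - Finsupp.lsingle 0 ∘ₗ Finsupp.lapply 0 := by
    apply Finsupp.lhom_ext
    intro n m
    rcases n with _ | n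
    · simp
    · have : (n : K) + 1 ≠ 0 := by exact_mod_cast n.succ_ne_zero
      simp [smul_smul, -Finsupp.smul_single, this]
  exact LinearMap.congr_fun this p

lemma auxInt_D [CharZero K] (p : ℕ →₀ M) :
    auxInt (K := K) (auxD (K := K) p) = auxE (K := K) p - p 0 := by
  rw [← auxE_J, auxJ_D, map_sub, auxE_single]

lemma aux_mem_fibre {L : Type v} [AddCommGroup L] [Module K L]
    {g : DGLAStruct K L} {h : DGLAStruct K M} (χ : DGLAStructHom g h) (l : L) (p q : ℕ →₀ M) :
    (l, (p, q)) ∈ fibreSub χ ↔ p 0 = 0 ∧ auxE (K := K) p = χ.toFun l := by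
  rw [← sub_eq_zero (a := auxE (K := K) p), ← Prod.mk_eq_zero]
  rfl

lemma aux_homog {L : Type v} [AddCommGroup L] [Module K L]
    {g : DGLAStruct K L} {h : DGLAStruct K M} (χ : DGLAStructHom g h)
    (hχ : Function.Injective χ.toFun) (i : ℤ) (l : L) (hl : χ.toFun l ∈ h.grading i) :
    l ∈ g.grading i := by
  classical
  letI := g.isInternal.chooseDecomposition
  letI := h.isInternal.chooseDecomposition
  have key : ∀ (x : L) (j : ℤ), (DirectSum.decompose h.grading (χ.toFun x) j : M) =
      χ.toFun (DirectSum.decompose g.grading x j : L) := by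
    intro x j
    induction x using DirectSum.Decomposition.inductionOn g.grading with
    | zero => simp
    | @homogeneous k m =>
      by_cases hkj : k = j
      · subst hkj
        rw [DirectSum.decompose_of_mem_same _ (χ.map_grading k m m.2),
          DirectSum.decompose_of_mem_same _ m.2]
      · rw [DirectSum.decompose_of_mem_ne _ (χ.map_grading k m m.2) hkj,
          DirectSum.decompose_of_mem_ne _ m.2 hkj, map_zero]
    | add a b ha hb =>
      simp [DirectSum.decompose_add, ha, hb]
  have := key l i
  rw [DirectSum.decompose_of_mem_same _ hl] at this
  rw [hχ this]
  exact SetLike.coe_mem _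

end Aux

/-- Let `χ : L → M` be an injective morphism of differential graded
Lie algebras over a field `K` of characteristic `0`.  Then the map
`TW(χ) → (M/χ(L))[−1]`, `(l, p(t) m₀ + q(t) dt m₁) ↦ (∫₀¹ q(t) dt) · m₁ mod χ(L)`,
is a surjective quasi-isomorphism of complexes from the homotopy fibre of `χ` to the
shifted cokernel of `χ`.  Here `cq` is the shifted cokernel complex: its degree `i`
piece is the image of `M^{i-1}` and its differential is `-d̄`, and the integral of
`q(t) dt = Σ q_n t^n dt` is `Σ q_n/(n+1)`. -/
theorem homotopy_fibre_to_cokernel_qis {K : Type u} [Field K] [CharZero K]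
    {L M : Type u} [AddCommGroup L] [Module K L] [AddCommGroup M] [Module K M]
    {g : DGLAStruct K L} {h : DGLAStruct K M} (χ : DGLAStructHom g h)
    (hχ : Function.Injective χ.toFun)
    (mt : DGLAStruct K (PolyDt K M)) (hmt : IsPolyFormsDGLA h mt)
    (tw : DGLAStruct K ↥(fibreSub χ)) (htw : IsHomotopyFibre χ mt tw)
    (cq : CochainStruct K (M ⧸ LinearMap.range χ.toFun))
    (hcq_grading : ∀ i : ℤ, cq.grading i =
      Submodule.map (LinearMap.range χ.toFun).mkQ (h.grading (i - 1)))
    (hcq_d : ∀ x : M, cq.d ((LinearMap.range χ.toFun).mkQ x) =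
      -(LinearMap.range χ.toFun).mkQ (h.d x)) :
    ∃ F : CochainMap tw.toCochainStruct cq,
      (∀ v : fibreSub χ,
        F.toFun v = (LinearMap.range χ.toFun).mkQ
          ((v : L × PolyDt K M).2.2.sum fun n m => (((n : K) + 1)⁻¹) • m)) ∧
      Function.Surjective F.toFun ∧
      ∀ i : ℤ, Function.Bijective (F.cohMap i) := by
  have hmem : ∀ l, (LinearMap.range χ.toFun).mkQ (χ.toFun l) = 0 := fun l => by
    rw [Submodule.mkQ_apply, Submodule.Quotient.mk_eq_zero]; exact ⟨l, rfl⟩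
  have hd : ∀ (l : L) (p q : ℕ →₀ M) (hv : (l, (p, q)) ∈ fibreSub χ),
      (tw.d ⟨(l, (p, q)), hv⟩ : L × PolyDt K M) =
      (g.d l, (Finsupp.mapRange.linearMap h.d p,
        auxD (K := K) p - Finsupp.mapRange.linearMap h.d q)) := by
    intro l p q hv
    rw [htw.d_eq, ← aux_d hmt]
  have hgr : ∀ (i : ℤ) (l : L) (p q : ℕ →₀ M) (hv : (l, (p, q)) ∈ fibreSub χ),
      (⟨(l, (p, q)), hv⟩ : fibreSub χ) ∈ tw.grading i ↔
      l ∈ g.grading i ∧ (∀ n, p n ∈ h.grading i) ∧ ∀ n, q n ∈ h.grading (i - 1) := by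
    intro i l p q hv
    rw [htw.grading_eq, hmt.grading_eq]
    rfl
  let F : CochainMap tw.toCochainStruct cq :=
    { toFun := (LinearMap.range χ.toFun).mkQ ∘ₗ auxInt (K := K) ∘ₗ LinearMap.snd K _ _ ∘ₗ LinearMap.snd K _ _ ∘ₗ
        (fibreSub χ).subtype
      map_grading := by
        rintro i ⟨⟨l, p, q⟩, hv⟩ hx
        obtain ⟨-, -, hq⟩ := (hgr i l p q hv).1 hx
        rw [hcq_grading]
        refine Submodule.mem_map_of_mem ?_
        exact Submodule.sum_mem _ fun n _ => Submodule.smul_mem _ _ (hq n)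
      map_d := by
        rintro ⟨⟨l, p, q⟩, hv⟩
        obtain ⟨h0, h1⟩ := (aux_mem_fibre χ l p q).1 hv
        simp only [LinearMap.comp_apply, Submodule.subtype_apply, hd, LinearMap.snd_apply]
        rw [hcq_d, map_sub, auxInt_D, h0, h1, auxInt_map, map_sub, sub_zero, hmem, zero_sub] }
  have hF : ∀ (l : L) (p q : ℕ →₀ M) (hv : (l, (p, q)) ∈ fibreSub χ),
      F.toFun ⟨(l, (p, q)), hv⟩ = (LinearMap.range χ.toFun).mkQ (auxInt (K := K) q) := fun _ _ _ _ => rfl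
  refine ⟨F, fun v => rfl, ?_, fun i => ⟨?_, ?_⟩⟩
  · intro y
    obtain ⟨m, rfl⟩ := (LinearMap.range χ.toFun).mkQ_surjective y
    refine ⟨⟨(0, (0, Finsupp.single 0 m)), (aux_mem_fibre χ _ _ _).2 ⟨by simp, by simp⟩⟩, ?_⟩
    rw [hF]; simp
  · rw [injective_iff_map_eq_zero]
    intro x
    obtain ⟨⟨⟨⟨l, p, q⟩, hv⟩, hx⟩, rfl⟩ := Submodule.mkQ_surjective _ x
    intro h0
    have h0' := (Submodule.Quotient.mk_eq_zero _).1 h0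
    obtain ⟨-, z, hz⟩ := h0'
    refine (Submodule.Quotient.mk_eq_zero _).2 ?_
    obtain ⟨hx1, hx2⟩ := hx
    refine ⟨hx1, ?_⟩
    have hx3 := congrArg Subtype.val (LinearMap.mem_ker.1 hx2)
    rw [hd] at hx3
    simp only [ZeroMemClass.coe_zero, Prod.mk_eq_zero] at hx3
    obtain ⟨hdl, hdp, hpq⟩ := hx3
    obtain ⟨e0, e1⟩ := (aux_mem_fibre χ l p q).1 hv
    obtain ⟨n, rfl⟩ := (LinearMap.range χ.toFun).mkQ_surjective z
    have hz' : cq.d ((LinearMap.range χ.toFun).mkQ n) = (LinearMap.range χ.toFun).mkQ (auxInt (K := K) q) := hz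
    rw [hcq_d, ← sub_eq_zero, ← map_neg, ← map_sub, Submodule.mkQ_apply,
      Submodule.Quotient.mk_eq_zero] at hz'
    obtain ⟨l', hl'⟩ := hz'
    have hP1 : auxE (K := K) (auxJ (K := K) q + Finsupp.single 1 (h.d n)) = χ.toFun (-l') := by
      rw [map_neg, hl', map_add, auxE_J, auxE_single]; abel
    have hdP : Finsupp.mapRange.linearMap h.d (auxJ (K := K) q + Finsupp.single 1 (h.d n)) = p := by
      rw [map_add, auxJ_map, ← sub_eq_zero.1 hpq, auxJ_D, e0]
      simp [h.d_sq]
    refine ⟨⟨(-l', (auxJ (K := K) q + Finsupp.single 1 (h.d n), Finsupp.single 0 n)),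
      (aux_mem_fibre χ _ _ _).2 ⟨by simp [auxJ_zero], hP1⟩⟩, ?_⟩
    apply Subtype.ext
    rw [hd]
    refine Prod.ext ?_ (Prod.ext hdP ?_)
    · apply hχ
      change χ.toFun (g.d (-l')) = χ.toFun l
      rw [χ.map_d, ← hP1, ← auxE_map, hdP, e1]
    · change _ = q
      simp only [map_add, auxD_J]
      simp
  · intro y
    obtain ⟨⟨y, hy1, hy2⟩, rfl⟩ := Submodule.mkQ_surjective _ y
    have hy1' := hy1
    rw [hcq_grading] at hy1'
    obtain ⟨m, hm, rfl⟩ := hy1'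
    have hy3 : cq.d ((LinearMap.range χ.toFun).mkQ m) = 0 := hy2
    rw [hcq_d, neg_eq_zero, Submodule.mkQ_apply, Submodule.Quotient.mk_eq_zero] at hy3
    obtain ⟨l, hl⟩ := hy3
    have hdm : h.d m ∈ h.grading i := by simpa using h.d_degree _ _ hm
    have hlg : l ∈ g.grading i := aux_homog χ hχ i l (hl ▸ hdm)
    have hv : (l, (Finsupp.single 1 (h.d m), Finsupp.single 0 m)) ∈ fibreSub χ :=
      (aux_mem_fibre χ _ _ _).2 ⟨by simp, by simp [hl]⟩
    have hsing : ∀ (j : ℤ) (k : ℕ) (x : M), x ∈ h.grading j →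
        ∀ n, Finsupp.single k x n ∈ h.grading j := by
      intro j k x hx n
      rw [Finsupp.single_apply]
      split_ifs
      · exact hx
      · exact Submodule.zero_mem _
    have hc : (⟨_, hv⟩ : fibreSub χ) ∈ tw.cocycles i := by
      refine ⟨(hgr _ _ _ _ _).2 ⟨hlg, hsing _ _ _ hdm, hsing _ _ _ hm⟩, ?_⟩
      refine LinearMap.mem_ker.2 ?_
      apply Subtype.ext
      rw [hd]
      refine Prod.ext ?_ (Prod.ext ?_ ?_)
      · apply hχ
        change χ.toFun (g.d l) = χ.toFun 0
        rw [χ.map_d, hl, h.d_sq, map_zero]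
      · simp [h.d_sq]
      · simp
    refine ⟨Submodule.mkQ _ ⟨_, hc⟩, ?_⟩
    refine congrArg (Submodule.mkQ _) (Subtype.ext ?_)
    change F.toFun ⟨_, hv⟩ = (LinearMap.range χ.toFun).mkQ m
    rw [hF]; simp
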